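/- Let α be irrational with continued fraction denominators (q_n), g : 𝕋 → ℝ a C¹ function with ∫_𝕋 g dm_𝕋 = 0, c ∈ ℝ, f(x) = g(x) + {x} + c with f > 0, L = min{1, inf_𝕋 f}, M = max{1, sup_𝕋 f}, β ∈ (0,1]. Let x, y ∈ 𝕋 satisfy β/(200Mq_{n+1}) < ‖x−y‖ ≤ β/(200Mq_n) for some n ≥ 1, assume |g^{(m)}(x) − g^{(m)}(y)| ≤ max{1, |m|·‖x−y‖} for all m ∈ ℤ, and assume 0 ∉ ⋃_{k=0}^{⌊q_{n+1}/6⌋} R_α^k [x,y]. Then for every integer m with 0 ≤ m ≤ β/(10⁴M·‖x−y‖) one has |f^{(m)}(x) − f^{(m)}(y)| < 2. -/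

import Mathlib

/-!
The bound on `m` together with `β / (200 M q_{n+1}) < ‖x - y‖` forces `m ≤ q_{n+1} / 50`, so every
time `k < m` lies in the window during which the orbit of the arc `[x, y]` avoids `0`. On an arc
avoiding `0` the sawtooth `{·}` is an isometry (`abs_fract_sub_fract_of_not_hitsZero`), so the
sawtooth part of `f^{(m)}(x) - f^{(m)}(y)` is at most `m ‖x - y‖ ≤ 10⁻⁴`, while the `g` part is
at most `max {1, m ‖x - y‖} = 1`.
-/


/-- Distance of a real number to the nearest integer. -/
noncomputable def normT (x : ℝ) : ℝ := |x - round x|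

/-- The Birkhoff cocycle `f^{(n)}(x)` over the rotation by `α`, for `n ∈ ℤ`. -/
noncomputable def birkhoff (α : ℝ) (f : ℝ → ℝ) (n : ℤ) (x : ℝ) : ℝ :=
  if 0 ≤ n then ∑ i ∈ Finset.range n.toNat, f (x + (i : ℕ) * α)
  else -∑ i ∈ Finset.range (-n).toNat, f (x + ((n : ℝ) + (i : ℕ)) * α)

/-- `qden α n` is the denominator `q_n` of the `n`-th convergent of the continued fraction
expansion of `α`:  `q₀ = 1`, `q₁ = a₁`, `q_n = a_n q_{n-1} + q_{n-2}`. -/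
noncomputable def qden (α : ℝ) (n : ℕ) : ℝ := (GenContFract.of α).dens n

/-- `hitsZero x y` says that the point `0` of `𝕋 = ℝ/ℤ` belongs to the shortest closed arc
connecting (the projections of) `x` and `y`. -/
def hitsZero (x y : ℝ) : Prop :=
  ∃ m : ℤ, (m : ℝ) ∈ Set.uIcc x (x + (y - x - round (y - x)))

lemma normT_neg (x : ℝ) : normT (-x) = normT x := by
  unfold normT
  rw [abs_sub_round_eq_min, abs_sub_round_eq_min]
  by_cases h : Int.fract x = 0
  · rw [Int.fract_neg_eq_zero.mpr h, h]
  · rw [Int.fract_neg h, sub_sub_cancel, min_comm]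

/-- If the shortest arc from `x` to `y` avoids `0`, its two ends have representatives with the same
integer part, so the fractional parts differ exactly by the signed length of the arc. -/
lemma abs_fract_sub_fract_of_not_hitsZero {x y : ℝ} (h : ¬ hitsZero x y) :
    |Int.fract x - Int.fract y| = normT (x - y) := by
  have hfl : ⌊x⌋ = ⌊x + (y - x - round (y - x))⌋ := by
    set z := x + (y - x - round (y - x)) with hz
    by_contra hne
    apply h
    rw [hitsZero, ← hz]
    rcases lt_or_gt_of_ne hne with hlt | hlt
    · exact ⟨⌊z⌋, Set.mem_uIcc.mpr (Or.inl ⟨(Int.floor_lt.mp hlt).le, Int.floor_le z⟩)⟩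
    · exact ⟨⌊x⌋, Set.mem_uIcc.mpr (Or.inr ⟨(Int.floor_lt.mp hlt).le, Int.floor_le x⟩)⟩
  have hy : Int.fract y = Int.fract (x + (y - x - round (y - x))) := by
    rw [show x + (y - x - round (y - x)) = y - (round (y - x) : ℤ) by ring, Int.fract_sub_intCast]
  have hxy : Int.fract x - Int.fract y = -(y - x - round (y - x)) := by
    rw [hy, Int.fract, Int.fract, ← hfl]
    ring
  rw [hxy, abs_neg, ← neg_sub y x, normT_neg, normT]

lemma birkhoff_natCast (α : ℝ) (f : ℝ → ℝ) (m : ℕ) (x : ℝ) :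
    birkhoff α f m x = ∑ i ∈ Finset.range m, f (x + i * α) := by
  simp [birkhoff]

lemma one_le_qden (α : ℝ) (n : ℕ) : 1 ≤ qden α n := by
  induction n with
  | zero => simp [qden]
  | succ k ih => exact ih.trans GenContFract.of_den_mono

/-- Case (B), upper bound: if `β/(200Mq_{n+1}) < ‖x-y‖ ≤ β/(200Mq_n)`, the `C¹` part satisfies
`|g^{(m)}(x) - g^{(m)}(y)| ≤ max{1, |m|‖x-y‖}` for all `m`, and the forward orbit of `[x,y]`
avoids `0` up to time `⌊q_{n+1}/6⌋`, then `|f^{(m)}(x) - f^{(m)}(y)| < 2` for all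
`0 ≤ m ≤ β/(10⁴M‖x-y‖)`. -/
theorem caseB_cocycle_upper_bound
    (α : ℝ) (hα : Irrational α)
    (g : ℝ → ℝ) (hper : Function.Periodic g 1) (hg : ContDiff ℝ 1 g)
    (hint : ∫ x in (0:ℝ)..1, g x = 0) (c : ℝ)
    (f : ℝ → ℝ) (hf : ∀ x, f x = g x + Int.fract x + c) (hfpos : ∀ x, 0 < f x)
    (L M : ℝ) (hL : L = min 1 (sInf (Set.range f))) (hM : M = max 1 (sSup (Set.range f)))
    (β : ℝ) (hβ : 0 < β) (hβ1 : β ≤ 1)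
    (x y : ℝ) (n : ℕ) (hn : 1 ≤ n)
    (hd1 : β / (200 * M * qden α (n + 1)) < normT (x - y))
    (hd2 : normT (x - y) ≤ β / (200 * M * qden α n))
    (hgxy : ∀ m : ℤ, |birkhoff α g m x - birkhoff α g m y|
      ≤ max 1 (|(m : ℝ)| * normT (x - y)))
    (havoid : ∀ k : ℕ, (k : ℝ) ≤ (⌊qden α (n + 1) / 6⌋ : ℤ) →
      ¬ hitsZero (x + k * α) (y + k * α)) :
    ∀ m : ℕ, (m : ℝ) ≤ β / (10 ^ 4 * M * normT (x - y)) →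
      |birkhoff α f m x - birkhoff α f m y| < 2 := by
  intro m hm
  have hM1 : 1 ≤ M := hM ▸ le_max_left _ _
  have hq := one_le_qden α (n + 1)
  set q := qden α (n + 1)
  set d := normT (x - y)
  have hM0 : 0 < M := by linarith
  have hq0 : 0 < q := by linarith
  have hd : 0 < d := lt_of_le_of_lt (by positivity) hd1
  rw [div_lt_iff₀ (by positivity)] at hd1
  rw [le_div_iff₀ (by positivity)] at hm
  have hmd : m * d ≤ 1 / 10 ^ 4 := by
    have h0 : 0 ≤ m * d := by positivity
    nlinarith
  have hmq : (m : ℝ) ≤ q / 6 := by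
    have h1 : (m : ℝ) * 50 * (200 * M * d) < q * (200 * M * d) := by linarith
    have h2 := lt_of_mul_lt_mul_right h1 (by positivity)
    linarith
  have hfract : ∀ k ∈ Finset.range m,
      |Int.fract (x + k * α) - Int.fract (y + k * α)| ≤ d := by
    intro k hk
    have hkm : (k : ℝ) ≤ m := by exact_mod_cast (Finset.mem_range.mp hk).le
    have hkq : (k : ℝ) ≤ (⌊q / 6⌋ : ℤ) := by
      have h : (k : ℤ) ≤ ⌊q / 6⌋ := Int.le_floor.mpr (by push_cast; linarith)
      exact_mod_cast h
    rw [abs_fract_sub_fract_of_not_hitsZero (havoid k hkq), add_sub_add_right_eq_sub]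
  have hsum : |∑ k ∈ Finset.range m, (Int.fract (x + k * α) - Int.fract (y + k * α))|
      ≤ m * d := by
    refine (Finset.abs_sum_le_sum_abs _ _).trans ((Finset.sum_le_sum hfract).trans ?_)
    simp
  have hg1 : |birkhoff α g m x - birkhoff α g m y| ≤ 1 := by
    refine (hgxy m).trans (max_le le_rfl ?_)
    rw [Int.cast_natCast, Nat.abs_cast]
    linarith
  have hdecomp : birkhoff α f m x - birkhoff α f m y =
      (birkhoff α g m x - birkhoff α g m y)
        + ∑ k ∈ Finset.range m, (Int.fract (x + k * α) - Int.fract (y + k * α)) := by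
    simp only [birkhoff_natCast, hf, ← Finset.sum_sub_distrib, ← Finset.sum_add_distrib]
    exact Finset.sum_congr rfl fun k _ => by ring
  rw [hdecomp]
  refine (abs_add_le _ _).trans_lt ?_
  linarith
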